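/- One-step expectation bound for Quantile-RaSK with exact step in the corrupted (noiseless) case (Theorem 3.3(b)): under the same setup and hypotheses as Theorem 3.3(a) — A full rank with unit-norm rows, b = A x̂ + b^c with exactly βm corruptions, β < q < 1 − β, the condition (2q/(q−β))·(2√β/√(1−q−β) + β/(1−q−β))·((|x̂|_min + 2λ)/|x̂|_min) < σ̃_{q−β,min}(A)²/σ_max(A)², x with x* ∈ ∂f(x) ∩ Range(Aᵀ), Q the q-quantile of residuals, N₂ = {i : |⟨a_i, x⟩ − b_i| ≤ Q} with |N₂| = qm — define for i ∈ N₂: t_i a minimizer of t ↦ f*(x* − t·a_i) + t·b_i, x_i'* = x* − t_i·a_i, and x_i' with x_i'* ∈ ∂f(x_i'). Then (1/(qm))·Σ_{i ∈ N₂} D_f^{x_i'*}(x_i', x̂) ≤ (1 − C)·D_f^{x*}(x, x̂) + (2λ/(qm))·‖b − A x̂‖·‖A‖_{1,2}, where C = ((q−β)/(2q²m))·(|x̂|_min/(|x̂|_min + 2λ))·σ̃_{q−β,min}(A)² − (1/(qm))·(2√β/√(1−q−β) + β/(1−q−β))·σ_max(A)² and ‖A‖_{1,2} = (Σ_{i=1}^m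 ‖a_i‖₁²)^{1/2}. -/

import Mathlib

/-- Euclidean inner product on finite-dimensional real coordinate space. -/
noncomputable def ip {I : Type*} [Fintype I] (u v : I → ℝ) : ℝ := ∑ i, u i * v i

/-- Euclidean norm. -/
noncomputable def enorm2 {I : Type*} [Fintype I] (v : I → ℝ) : ℝ :=
  Real.sqrt (∑ i, (v i) ^ 2)

/-- ℓ₁ norm. -/
noncomputable def norm1 {I : Type*} [Fintype I] (v : I → ℝ) : ℝ := ∑ i, |v i|

/-- ℓ∞ norm. -/
noncomputable def normInf {I : Type*} [Fintype I] (v : I → ℝ) : ℝ := ⨆ i, |v i|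

/-- Subdifferential of a convex function. -/
def subdiff {I : Type*} [Fintype I] (f : (I → ℝ) → ℝ) (x : I → ℝ) : Set (I → ℝ) :=
  {g | ∀ y, f y ≥ f x + ip g (y - x)}

/-- Bregman distance `D_f^{g}(x, y)` with respect to `f` and subgradient `g ∈ ∂f(x)`. -/
noncomputable def breg {I : Type*} [Fintype I] (f : (I → ℝ) → ℝ) (g x y : I → ℝ) : ℝ :=
  f y - f x - ip g (y - x)

/-- Fenchel conjugate. -/
noncomputable def fconj {I : Type*} [Fintype I] (f : (I → ℝ) → ℝ) (u : I → ℝ) : ℝ :=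
  ⨆ z, (ip u z - f z)

/-- Soft shrinkage (soft thresholding) operator. -/
noncomputable def softShrink {I : Type*} [Fintype I] (lam : ℝ) (x : I → ℝ) : I → ℝ :=
  fun i => Real.sign (x i) * max (|x i| - lam) 0

/-- Smallest singular value `σ_min(M) = inf_{x ≠ 0} ‖Mx‖/‖x‖`. -/
noncomputable def sigmaMin {I J : Type*} [Fintype I] [Fintype J] (M : Matrix I J ℝ) : ℝ :=
  sInf {r | ∃ x : J → ℝ, x ≠ 0 ∧ r = enorm2 (M.mulVec x) / enorm2 x}

/-- Largest singular value `σ_max(M) = sup_{x ≠ 0} ‖Mx‖/‖x‖`. -/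
noncomputable def sigmaMax {I J : Type*} [Fintype I] [Fintype J] (M : Matrix I J ℝ) : ℝ :=
  sSup {r | ∃ x : J → ℝ, x ≠ 0 ∧ r = enorm2 (M.mulVec x) / enorm2 x}

/-- Frobenius norm. -/
noncomputable def frobNorm {I J : Type*} [Fintype I] [Fintype J] (M : Matrix I J ℝ) : ℝ :=
  Real.sqrt (∑ i, ∑ j, (M i j) ^ 2)

/-- `‖A‖_{1,2} = sqrt (∑ i ‖a_i‖₁²)` where `a_iᵀ` are the rows of `A`. -/
noncomputable def norm12 {m n : ℕ} (A : Matrix (Fin m) (Fin n) ℝ) : ℝ :=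
  Real.sqrt (∑ i, (norm1 (A i)) ^ 2)

/-- Column submatrix `A_J`. -/
noncomputable def colSub {m n : ℕ} (A : Matrix (Fin m) (Fin n) ℝ) (J : Finset (Fin n)) :
    Matrix (Fin m) {j // j ∈ J} ℝ := A.submatrix id Subtype.val

/-- Row submatrix `A_I`. -/
noncomputable def rowSub {m n : ℕ} (A : Matrix (Fin m) (Fin n) ℝ) (I : Finset (Fin m)) :
    Matrix {i // i ∈ I} (Fin n) ℝ := A.submatrix Subtype.val id

/-- Submatrix `A_{I,J}` with rows in `I` and columns in `J`. -/
noncomputable def subMat {m n : ℕ} (A : Matrix (Fin m) (Fin n) ℝ)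
    (I : Finset (Fin m)) (J : Finset (Fin n)) :
    Matrix {i // i ∈ I} {j // j ∈ J} ℝ := A.submatrix Subtype.val Subtype.val

/-- `σ̃_min(A) = min{σ_min(A_J) : J ⊆ {1,…,n}, A_J ≠ 0}`. -/
noncomputable def sigmaTildeMin {m n : ℕ} (A : Matrix (Fin m) (Fin n) ℝ) : ℝ :=
  sInf {r | ∃ J : Finset (Fin n), colSub A J ≠ 0 ∧ r = sigmaMin (colSub A J)}

/-- `σ̃_{q−β,min}(A)` (with `k = (q−β)m`): min of `σ_min(A_{I,J})` over `|I| = k` and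
`J` nonempty. -/
noncomputable def sigmaTildeQBMin {m n : ℕ} (A : Matrix (Fin m) (Fin n) ℝ) (k : ℕ) : ℝ :=
  sInf {r | ∃ (I : Finset (Fin m)) (J : Finset (Fin n)),
    I.card = k ∧ J.Nonempty ∧ r = sigmaMin (subMat A I J)}

/-- Variant of `σ̃_{q−β,min}(A)` requiring moreover `A_J ≠ 0`. -/
noncomputable def sigmaTildeQBMin' {m n : ℕ} (A : Matrix (Fin m) (Fin n) ℝ) (k : ℕ) : ℝ :=
  sInf {r | ∃ (I : Finset (Fin m)) (J : Finset (Fin n)),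
    I.card = k ∧ J.Nonempty ∧ colSub A J ≠ 0 ∧ r = sigmaMin (subMat A I J)}

/-- `σ_{q−β,min}(A)` (with `k = (q−β)m`): min of `σ_min(A_I)` over `|I| = k`. -/
noncomputable def sigmaQBMin {m n : ℕ} (A : Matrix (Fin m) (Fin n) ℝ) (k : ℕ) : ℝ :=
  sInf {r | ∃ I : Finset (Fin m), I.card = k ∧ r = sigmaMin (rowSub A I)}

/-- The increasingly sorted rearrangement `y_(1) ≤ … ≤ y_(m)` of a finite tuple. -/
noncomputable def sortedVal {m : ℕ} (y : Fin m → ℝ) : Fin m → ℝ := y ∘ Tuple.sort y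

/-- The `q`-quantile of `y_1, …, y_m` in the case where `qm = k` is an integer:
`(y_(k) + y_(k+1))/2` (1-indexed). -/
noncomputable def quantileAt {m : ℕ} (k : ℕ) (y : Fin m → ℝ) : ℝ :=
  if h : 0 < k ∧ k < m then
    (sortedVal y ⟨k - 1, by omega⟩ + sortedVal y ⟨k, h.2⟩) / 2
  else 0

/-- `|x̂|_min = min{|x̂_j| : x̂_j ≠ 0}`. -/
noncomputable def xminOf {n : ℕ} (xhat : Fin n → ℝ) : ℝ :=
  sInf {r | ∃ j, xhat j ≠ 0 ∧ r = |xhat j|}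

/-! By strong convexity of `f`, comparing the exact step at row `i` with the linear Kaczmarz step
gives `D' ≤ D + ½ (cᵢ² - ⟨aᵢ, x - x̂⟩²) + 2 λ ‖aᵢ‖₁ |cᵢ|`, where `c = b - A x̂` is the corruption;
the last term appears because the two step sizes differ by at most `2 λ ‖aᵢ‖₁`. Summing over the
accepted rows `N`, the uncorrupted ones contribute the decrease `σ̃² ‖x - x̂‖²`. On a corrupted
accepted row `|cᵢ| ≤ |⟨aᵢ, x - x̂⟩| + Q`, and `Q` is small compared with `σ_max ‖x - x̂‖` because at
least `(1 - q - β) m` uncorrupted rows have a residual of size at least `Q`. The two-sided estimate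
`½ ‖x - x̂‖² ≤ D ≤ ((|x̂|_min + 2 λ) / |x̂|_min) ‖x - x̂‖²` turns this into a bound in `D`. -/

section Norms

variable {I : Type*} [Fintype I]

lemma ip_eq_dotProduct (u v : I → ℝ) : ip u v = u ⬝ᵥ v := rfl

lemma enorm2_eq_norm (v : I → ℝ) : enorm2 v = ‖WithLp.toLp 2 v‖ := by
  simp [enorm2, EuclideanSpace.norm_eq]

lemma norm1_eq_norm (v : I → ℝ) : norm1 v = ‖WithLp.toLp 1 v‖ := by
  simp [norm1, PiLp.norm_eq_of_L1]

lemma enorm2_nonneg (v : I → ℝ) : 0 ≤ enorm2 v := Real.sqrt_nonneg _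

lemma enorm2_eq_zero {v : I → ℝ} : enorm2 v = 0 ↔ v = 0 := by
  simp [enorm2_eq_norm]

lemma enorm2_sq (v : I → ℝ) : enorm2 v ^ 2 = ∑ i, v i ^ 2 :=
  Real.sq_sqrt (Finset.sum_nonneg fun _ _ ↦ sq_nonneg _)

lemma enorm2_sub_comm (v w : I → ℝ) : enorm2 (v - w) = enorm2 (w - v) := by
  simp only [enorm2_eq_norm, WithLp.toLp_sub, norm_sub_rev]

lemma enorm2_add_sq (v w : I → ℝ) :
    enorm2 (v + w) ^ 2 = enorm2 v ^ 2 + 2 * ip v w + enorm2 w ^ 2 := by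
  simp only [enorm2_sq, ip, Finset.mul_sum, ← Finset.sum_add_distrib]
  exact Finset.sum_congr rfl fun i _ ↦ by rw [Pi.add_apply]; ring

lemma enorm2_smul_sq (s : ℝ) (v : I → ℝ) : enorm2 (s • v) ^ 2 = s ^ 2 * enorm2 v ^ 2 := by
  simp only [enorm2_sq, Pi.smul_apply, smul_eq_mul, mul_pow, Finset.mul_sum]

lemma norm1_nonneg (v : I → ℝ) : 0 ≤ norm1 v := Finset.sum_nonneg fun _ _ ↦ abs_nonneg _

lemma convexOn_norm1 : ConvexOn ℝ Set.univ (norm1 : (I → ℝ) → ℝ) := by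
  have h := (convexOn_univ_norm (E := PiLp 1 fun _ : I ↦ ℝ)).comp_linearMap
    (WithLp.linearEquiv 1 ℝ (I → ℝ)).symm.toLinearMap
  exact h.congr fun v _ ↦ (norm1_eq_norm v).symm

lemma norm1_add_single_le [DecidableEq I] (v : I → ℝ) (j : I) (s : ℝ) :
    norm1 (v + Pi.single j s) ≤ norm1 v + |s| := by
  have hsingle : norm1 (Pi.single j s : I → ℝ) = |s| := by
    rw [norm1_eq_norm]
    exact PiLp.norm_single 1 (fun _ ↦ ℝ) j s
  rw [← hsingle]
  simpa only [norm1_eq_norm, WithLp.toLp_add] using norm_add_le _ _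

lemma abs_ip_le_norm1_mul {r : ℝ} {v w : I → ℝ} (hw : ∀ i, |w i| ≤ r) :
    |ip v w| ≤ norm1 v * r := by
  rw [norm1, Finset.sum_mul]
  refine (Finset.abs_sum_le_sum_abs _ _).trans (Finset.sum_le_sum fun i _ ↦ ?_)
  rw [abs_mul]
  exact mul_le_mul_of_nonneg_left (hw i) (abs_nonneg _)

end Norms

section SingularValues

variable {I J : Type*} [Fintype I] [Fintype J]

open scoped Matrix.Norms.L2Operator in
lemma enorm2_mulVec_le_sigmaMax_mul (M : Matrix I J ℝ) (v : J → ℝ) :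
    enorm2 (M.mulVec v) ≤ sigmaMax M * enorm2 v := by
  classical
  have hbdd : BddAbove {r | ∃ x : J → ℝ, x ≠ 0 ∧ r = enorm2 (M.mulVec x) / enorm2 x} := by
    refine ⟨‖M‖, ?_⟩
    rintro _ ⟨w, -, rfl⟩
    refine div_le_of_le_mul₀ (enorm2_nonneg w) (norm_nonneg M) ?_
    simp only [enorm2_eq_norm]
    exact M.l2_opNorm_mulVec (WithLp.toLp 2 w)
  obtain rfl | hv := eq_or_ne v 0
  · simp [enorm2]
  · have hv' : 0 < enorm2 v := (enorm2_nonneg v).lt_of_ne' (mt enorm2_eq_zero.mp hv)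
    exact (div_le_iff₀ hv').mp (le_csSup hbdd ⟨v, hv, rfl⟩)

lemma sigmaMin_nonneg (M : Matrix I J ℝ) : 0 ≤ sigmaMin M := by
  refine Real.sInf_nonneg ?_
  rintro _ ⟨x, -, rfl⟩
  exact div_nonneg (enorm2_nonneg _) (enorm2_nonneg _)

lemma sigmaMin_mul_le_enorm2_mulVec (M : Matrix I J ℝ) (v : J → ℝ) :
    sigmaMin M * enorm2 v ≤ enorm2 (M.mulVec v) := by
  have hbdd : BddBelow {r | ∃ x : J → ℝ, x ≠ 0 ∧ r = enorm2 (M.mulVec x) / enorm2 x} := by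
    refine ⟨0, ?_⟩
    rintro _ ⟨x, -, rfl⟩
    exact div_nonneg (enorm2_nonneg _) (enorm2_nonneg _)
  obtain rfl | hv := eq_or_ne v 0
  · simp [enorm2]
  · have hv' : 0 < enorm2 v := (enorm2_nonneg v).lt_of_ne' (mt enorm2_eq_zero.mp hv)
    exact (le_div_iff₀ hv').mp (csInf_le hbdd ⟨v, hv, rfl⟩)

variable {m n k : ℕ} (A : Matrix (Fin m) (Fin n) ℝ)

lemma sigmaTildeQBMin_nonneg : 0 ≤ sigmaTildeQBMin A k := by
  refine Real.sInf_nonneg ?_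
  rintro _ ⟨I, J, -, -, rfl⟩
  exact sigmaMin_nonneg _

lemma sigmaTildeQBMin_le {I : Finset (Fin m)} {J : Finset (Fin n)} (hI : I.card = k)
    (hJ : J.Nonempty) : sigmaTildeQBMin A k ≤ sigmaMin (subMat A I J) := by
  refine csInf_le ⟨0, ?_⟩ ⟨I, J, hI, hJ, rfl⟩
  rintro _ ⟨I, J, -, -, rfl⟩
  exact sigmaMin_nonneg _

lemma enorm2_sq_subMat_univ_mulVec (I : Finset (Fin m)) (v : Fin n → ℝ) :
    enorm2 ((subMat A I Finset.univ).mulVec fun j ↦ v j) ^ 2 = ∑ i ∈ I, A.mulVec v i ^ 2 := by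
  rw [enorm2_sq, ← Finset.sum_coe_sort I]
  refine Finset.sum_congr rfl fun i _ ↦ congrArg (· ^ 2) ?_
  exact Finset.sum_coe_sort Finset.univ fun j ↦ A i j * v j

lemma sigmaTildeQBMin_sq_mul_le {I : Finset (Fin m)} (hI : k ≤ I.card) (v : Fin n → ℝ) :
    sigmaTildeQBMin A k ^ 2 * enorm2 v ^ 2 ≤ ∑ i ∈ I, A.mulVec v i ^ 2 := by
  obtain rfl | hv := eq_or_ne v 0
  · simp [enorm2_sq]
  obtain ⟨j, -⟩ := Function.ne_iff.mp hv
  obtain ⟨I', hI'I, hI'⟩ := Finset.exists_subset_card_eq hI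
  have hv' : enorm2 (fun j : {j // j ∈ (Finset.univ : Finset (Fin n))} ↦ v j) = enorm2 v :=
    congrArg Real.sqrt (Finset.sum_coe_sort Finset.univ fun j ↦ v j ^ 2)
  calc sigmaTildeQBMin A k ^ 2 * enorm2 v ^ 2
      = (sigmaTildeQBMin A k * enorm2 v) ^ 2 := (mul_pow ..).symm
    _ ≤ (sigmaMin (subMat A I' Finset.univ) * enorm2 v) ^ 2 :=
        pow_le_pow_left₀ (mul_nonneg (sigmaTildeQBMin_nonneg A) (enorm2_nonneg v))
          (mul_le_mul_of_nonneg_right (sigmaTildeQBMin_le A hI' ⟨j, Finset.mem_univ j⟩)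
            (enorm2_nonneg v)) 2
    _ ≤ enorm2 ((subMat A I' Finset.univ).mulVec fun j ↦ v j) ^ 2 :=
        pow_le_pow_left₀ (mul_nonneg (sigmaMin_nonneg _) (enorm2_nonneg v))
          (hv' ▸ sigmaMin_mul_le_enorm2_mulVec _ _) 2
    _ = ∑ i ∈ I', A.mulVec v i ^ 2 := enorm2_sq_subMat_univ_mulVec A I' v
    _ ≤ ∑ i ∈ I, A.mulVec v i ^ 2 :=
        Finset.sum_le_sum_of_subset_of_nonneg hI'I fun _ _ _ ↦ sq_nonneg _

end SingularValues

section StronglyConvex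

variable {I : Type*} [Fintype I]

/-- The function `g + ½‖·‖₂²`, which is 1-strongly convex when `g` is convex; the objective
`λ‖·‖₁ + ½‖·‖₂²` is `addHalfSq (λ • norm1)`. -/
noncomputable def addHalfSq (g : (I → ℝ) → ℝ) : (I → ℝ) → ℝ :=
  fun x ↦ g x + (1 / 2) * enorm2 x ^ 2

lemma breg_nonneg {f : (I → ℝ) → ℝ} {u x : I → ℝ} (hu : u ∈ subdiff f x) (y : I → ℝ) :
    0 ≤ breg f u x y := by
  have := hu y
  unfold breg
  linarith

lemma breg_addHalfSq (g : (I → ℝ) → ℝ) (u x y : I → ℝ) :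
    breg (addHalfSq g) u x y = breg g (u - x) x y + (1 / 2) * enorm2 (y - x) ^ 2 := by
  have hexp := enorm2_add_sq x (y - x)
  have hip : ip (u - x) (y - x) = ip u (y - x) - ip x (y - x) := sub_dotProduct ..
  rw [add_sub_cancel] at hexp
  simp only [breg, addHalfSq, hip]
  linarith

lemma sub_mem_subdiff {g : (I → ℝ) → ℝ} (hg : ConvexOn ℝ Set.univ g) {u x : I → ℝ}
    (hu : u ∈ subdiff (addHalfSq g) x) : u - x ∈ subdiff g x := by
  intro y
  have hsegment : ∀ ε ∈ Set.Ioc (0 : ℝ) 1,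
      -(ε * ((1 / 2) * enorm2 (y - x) ^ 2)) ≤ breg g (u - x) x y := by
    intro ε ⟨hε0, hε1⟩
    have hconv : g (x + ε • (y - x)) ≤ (1 - ε) * g x + ε * g y := by
      rw [show x + ε • (y - x) = (1 - ε) • x + ε • y by module]
      exact hg.2 (Set.mem_univ x) (Set.mem_univ y) (sub_nonneg.mpr hε1) hε0.le (by ring)
    have hsub := breg_nonneg hu (x + ε • (y - x))
    rw [breg_addHalfSq, add_sub_cancel_left, enorm2_smul_sq, breg, add_sub_cancel_left,
      ip_eq_dotProduct, dotProduct_smul, smul_eq_mul, ← ip_eq_dotProduct] at hsub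
    refine le_of_mul_le_mul_left ?_ hε0
    rw [breg]
    linarith
  have hlim : Filter.Tendsto (fun ε : ℝ ↦ -(ε * ((1 / 2) * enorm2 (y - x) ^ 2)))
      (nhdsWithin 0 (Set.Ioi 0)) (nhds 0) :=
    (Continuous.tendsto' (by fun_prop) 0 0 (by simp)).mono_left nhdsWithin_le_nhds
  have hbreg : 0 ≤ breg g (u - x) x y :=
    le_of_tendsto hlim (Filter.mem_of_superset (Ioc_mem_nhdsGT one_pos) hsegment)
  rw [breg] at hbreg
  linarith

lemma half_enorm2_sq_le_breg {g : (I → ℝ) → ℝ} (hg : ConvexOn ℝ Set.univ g) {u x : I → ℝ}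
    (hu : u ∈ subdiff (addHalfSq g) x) (y : I → ℝ) :
    (1 / 2) * enorm2 (y - x) ^ 2 ≤ breg (addHalfSq g) u x y := by
  rw [breg_addHalfSq]
  exact le_add_of_nonneg_left (breg_nonneg (sub_mem_subdiff hg hu) y)

lemma fconj_eq_of_mem_subdiff {f : (I → ℝ) → ℝ} {u x : I → ℝ} (hu : u ∈ subdiff f x) :
    fconj f u = ip u x - f x := by
  have hle (z : I → ℝ) : ip u z - f z ≤ ip u x - f x := by
    have := hu z
    rw [ip_eq_dotProduct, dotProduct_sub] at this
    simp only [ip_eq_dotProduct]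
    linarith
  exact le_antisymm (ciSup_le hle)
    (le_ciSup (f := fun z ↦ ip u z - f z) ⟨_, Set.forall_mem_range.mpr hle⟩ x)

lemma breg_eq_add_fconj_sub {f : (I → ℝ) → ℝ} {u x : I → ℝ} (hu : u ∈ subdiff f x) (y : I → ℝ) :
    breg f u x y = f y + fconj f u - ip u y := by
  rw [fconj_eq_of_mem_subdiff hu, breg, ip_eq_dotProduct, dotProduct_sub]
  simp only [ip_eq_dotProduct]
  ring

lemma fconj_sub_le {g : (I → ℝ) → ℝ} (hg : ConvexOn ℝ Set.univ g) {u x : I → ℝ}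
    (hu : u ∈ subdiff (addHalfSq g) x) (w : I → ℝ) :
    fconj (addHalfSq g) (u - w) ≤
      fconj (addHalfSq g) u - ip w x + (1 / 2) * enorm2 w ^ 2 := by
  refine ciSup_le fun z ↦ ?_
  have hbreg := half_enorm2_sq_le_breg hg hu z
  have hsq := enorm2_add_sq (z - x) w
  have hw : ip (z - x) w = ip w z - ip w x := by
    rw [ip_eq_dotProduct, dotProduct_comm, dotProduct_sub]; rfl
  have hu' : ip (u - w) z = ip u z - ip w z := sub_dotProduct ..
  rw [breg_eq_add_fconj_sub hu] at hbreg
  linarith [sq_nonneg (enorm2 (z - x + w))]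

end StronglyConvex

/-- The step size `t` is exact: it minimises the dual objective `s ↦ f*(u - s a) + s b` of the
Bregman projection of the primal–dual pair with dual variable `u` onto `{z | ⟨a, z⟩ = b}`. -/
def IsExactStep {I : Type*} [Fintype I] (f : (I → ℝ) → ℝ) (u a : I → ℝ) (b t : ℝ) : Prop :=
  ∀ s : ℝ, fconj f (u - t • a) + t * b ≤ fconj f (u - s • a) + s * b

namespace IsExactStep

variable {I : Type*} [Fintype I] {g : (I → ℝ) → ℝ} {u a x x' : I → ℝ} {b t : ℝ}

lemma ip_eq (ht : IsExactStep (addHalfSq g) u a b t) (hg : ConvexOn ℝ Set.univ g)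
    (ha : enorm2 a = 1) (hx' : u - t • a ∈ subdiff (addHalfSq g) x') : ip a x' = b := by
  set r := ip a x' - b
  have hopt := ht (t + r)
  have hsmooth := fconj_sub_le hg hx' (r • a)
  rw [enorm2_smul_sq, ha, ip_eq_dotProduct, smul_dotProduct, smul_eq_mul, ← ip_eq_dotProduct,
    sub_sub, ← add_smul] at hsmooth
  have hr0 : r ^ 2 ≤ 0 := by linarith
  exact sub_eq_zero.mp (pow_eq_zero_iff two_ne_zero |>.mp (hr0.antisymm (sq_nonneg r)))

-- The exact step is compared with the step `s = ⟨a, x⟩ - b` of the linear Kaczmarz method.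
lemma breg_le (ht : IsExactStep (addHalfSq g) u a b t) (hg : ConvexOn ℝ Set.univ g)
    (ha : enorm2 a = 1) (hx : u ∈ subdiff (addHalfSq g) x)
    (hx' : u - t • a ∈ subdiff (addHalfSq g) x') (y : I → ℝ) :
    breg (addHalfSq g) (u - t • a) x' y ≤
      breg (addHalfSq g) u x y - (1 / 2) * (ip a x - b) ^ 2 - t * (b - ip a y) := by
  set s := ip a x - b
  have hopt := ht s
  have hsmooth := fconj_sub_le hg hx (s • a)
  rw [enorm2_smul_sq, ha, ip_eq_dotProduct, smul_dotProduct, smul_eq_mul,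
    ← ip_eq_dotProduct] at hsmooth
  have hy : ip (u - t • a) y = ip u y - t * ip a y := by
    simp only [ip_eq_dotProduct, sub_dotProduct, smul_dotProduct, smul_eq_mul]
  rw [breg_eq_add_fconj_sub hx, breg_eq_add_fconj_sub hx', hy]
  linarith

end IsExactStep

section SparseRegularizer

variable {I : Type*} [Fintype I] {lam : ℝ}

lemma mul_le_mul_abs_of_abs_le {w : ℝ} (hw : |w| ≤ lam) (x : ℝ) : w * x ≤ lam * |x| :=
  (le_abs_self _).trans <| (abs_mul _ _).trans_le <|
    mul_le_mul_of_nonneg_right hw (abs_nonneg _)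

lemma convexOn_smul_norm1 (hlam : 0 ≤ lam) :
    ConvexOn ℝ Set.univ (lam • norm1 : (I → ℝ) → ℝ) := convexOn_norm1.smul hlam

lemma abs_le_of_mem_subdiff_norm1 (hlam : 0 ≤ lam) {w x : I → ℝ}
    (hw : w ∈ subdiff (lam • norm1) x) (j : I) : |w j| ≤ lam := by
  classical
  have hbound (s : ℝ) : w j * s ≤ lam * |s| := by
    have hsub := hw (x + Pi.single j s)
    rw [add_sub_cancel_left, ip_eq_dotProduct, dotProduct_single] at hsub
    simp only [Pi.smul_apply, smul_eq_mul] at hsub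
    linarith [mul_le_mul_of_nonneg_left (norm1_add_single_le x j s) hlam]
  have hpos := hbound 1
  have hneg := hbound (-1)
  simp only [abs_neg, abs_one] at hpos hneg
  exact abs_le.mpr ⟨by linarith, by linarith⟩

lemma mul_eq_of_mem_subdiff_norm1 (hlam : 0 ≤ lam) {w x : I → ℝ}
    (hw : w ∈ subdiff (lam • norm1) x) (j : I) : w j * x j = lam * |x j| := by
  have hle (i : I) : w i * x i ≤ lam * |x i| :=
    mul_le_mul_abs_of_abs_le (abs_le_of_mem_subdiff_norm1 hlam hw i) (x i)
  have hsum : ∑ i, w i * x i = ∑ i, lam * |x i| := by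
    refine (Finset.sum_le_sum fun i _ ↦ hle i).antisymm ?_
    have hzero := hw 0
    rw [zero_sub, ip_eq_dotProduct, dotProduct_neg, ← ip_eq_dotProduct] at hzero
    simp only [Pi.smul_apply, smul_eq_mul, norm1, ip, Pi.zero_apply, abs_zero,
      Finset.sum_const_zero, mul_zero] at hzero
    rw [← Finset.mul_sum]
    linarith
  exact (Finset.sum_eq_sum_iff_of_le fun i _ ↦ hle i).mp hsum j (Finset.mem_univ j)

lemma breg_norm1_eq_sum (hlam : 0 ≤ lam) {w x : I → ℝ} (hw : w ∈ subdiff (lam • norm1) x)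
    (y : I → ℝ) : breg (lam • norm1) w x y = ∑ j, (lam * |y j| - w j * y j) := by
  simp only [breg, Pi.smul_apply, smul_eq_mul, norm1, ip, Finset.mul_sum, Pi.sub_apply,
    ← Finset.sum_sub_distrib]
  refine Finset.sum_congr rfl fun j _ ↦ ?_
  rw [mul_sub, mul_eq_of_mem_subdiff_norm1 hlam hw j]
  ring

lemma abs_mul_sub_le {w x y : ℝ} (hw : |w| ≤ lam) (hwx : w * x = lam * |x|) :
    |y| * (lam * |y| - w * y) ≤ 2 * lam * (x - y) ^ 2 := by
  have hlam : 0 ≤ lam := (abs_nonneg w).trans hw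
  rcases lt_or_ge 0 (x * y) with hxy | hxy
  · have hx : x ^ 2 ≠ 0 := pow_ne_zero 2 (left_ne_zero_of_mul hxy.ne')
    have habs : |x| * |y| = x * y := by rw [← abs_mul, abs_of_pos hxy]
    have hwy : w * y = lam * |y| := mul_left_cancel₀ hx <| by
      calc x ^ 2 * (w * y) = (w * x) * (x * y) := by ring
        _ = lam * |x| * (|x| * |y|) := by rw [hwx, habs]
        _ = |x| ^ 2 * (lam * |y|) := by ring
        _ = x ^ 2 * (lam * |y|) := by rw [sq_abs]
    rw [hwy, sub_self, mul_zero]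
    positivity
  · have hwy : -w * y ≤ lam * |y| := mul_le_mul_abs_of_abs_le ((abs_neg w).trans_le hw) y
    calc |y| * (lam * |y| - w * y) ≤ |y| * (2 * lam * |y|) :=
          mul_le_mul_of_nonneg_left (by linarith) (abs_nonneg y)
      _ = 2 * lam * y ^ 2 := by rw [← sq_abs y]; ring
      _ ≤ 2 * lam * (x - y) ^ 2 := by gcongr 2 * lam * ?_; nlinarith [sq_nonneg x]

lemma xminOf_le_abs {n : ℕ} {y : Fin n → ℝ} {j : Fin n} (hj : y j ≠ 0) : xminOf y ≤ |y j| := by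
  refine csInf_le ⟨0, ?_⟩ ⟨j, hj, rfl⟩
  rintro _ ⟨i, -, rfl⟩
  exact abs_nonneg _

lemma xminOf_pos {n : ℕ} {y : Fin n → ℝ} (hy : y ≠ 0) : 0 < xminOf y := by
  obtain ⟨j, hj⟩ := Function.ne_iff.mp hy
  have hfinite : {r | ∃ j, y j ≠ 0 ∧ r = |y j|}.Finite := by
    refine (Set.finite_range fun j ↦ |y j|).subset ?_
    rintro _ ⟨i, -, rfl⟩
    exact ⟨i, rfl⟩
  have hne : {r | ∃ j, y j ≠ 0 ∧ r = |y j|}.Nonempty := ⟨|y j|, j, hj, rfl⟩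
  obtain ⟨i, hi, hmin⟩ := hne.csInf_mem hfinite
  rw [xminOf, hmin]
  exact abs_pos.mpr hi

lemma xminOf_mul_breg_norm1_le (hlam : 0 ≤ lam) {n : ℕ} {w x : Fin n → ℝ}
    (hw : w ∈ subdiff (lam • norm1) x) (y : Fin n → ℝ) :
    xminOf y * breg (lam • norm1) w x y ≤ 2 * lam * enorm2 (x - y) ^ 2 := by
  rw [breg_norm1_eq_sum hlam hw, enorm2_sq, Finset.mul_sum, Finset.mul_sum]
  refine Finset.sum_le_sum fun j _ ↦ ?_
  have hwj := abs_le_of_mem_subdiff_norm1 hlam hw j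
  have habs := abs_mul_sub_le (y := y j) hwj (mul_eq_of_mem_subdiff_norm1 hlam hw j)
  obtain hy | hy := eq_or_ne (y j) 0
  · simpa [hy] using habs
  · have hterm : 0 ≤ lam * |y j| - w j * y j :=
      sub_nonneg.mpr (mul_le_mul_abs_of_abs_le hwj (y j))
    exact (mul_le_mul_of_nonneg_right (xminOf_le_abs hy) hterm).trans habs

lemma div_mul_breg_le_enorm2_sq (hlam : 0 ≤ lam) {n : ℕ} {u x y : Fin n → ℝ}
    (hu : u ∈ subdiff (addHalfSq (lam • norm1)) x) (hy : y ≠ 0) :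
    xminOf y / (xminOf y + 2 * lam) * breg (addHalfSq (lam • norm1)) u x y ≤
      enorm2 (x - y) ^ 2 := by
  have hpos := xminOf_pos hy
  have hnorm1 := xminOf_mul_breg_norm1_le hlam
    (sub_mem_subdiff (convexOn_smul_norm1 hlam) hu) y
  rw [div_mul_eq_mul_div, div_le_iff₀ (by positivity), breg_addHalfSq, enorm2_sub_comm y x]
  linarith [mul_nonneg hpos.le (sq_nonneg (enorm2 (x - y)))]

namespace IsExactStep

variable {u a x x' : I → ℝ} {b t : ℝ}

lemma abs_sub_le (ht : IsExactStep (addHalfSq (lam • norm1)) u a b t) (hlam : 0 ≤ lam)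
    (ha : enorm2 a = 1) (hx : u ∈ subdiff (addHalfSq (lam • norm1)) x)
    (hx' : u - t • a ∈ subdiff (addHalfSq (lam • norm1)) x') :
    |t - (ip a x - b)| ≤ norm1 a * (2 * lam) := by
  have hconv := convexOn_smul_norm1 (I := I) hlam
  have hself : ip a a = 1 := by
    rw [← one_pow 2, ← ha, enorm2_sq]
    exact Finset.sum_congr rfl fun i _ ↦ (sq (a i)).symm
  have hip : ip a ((u - x) - (u - t • a - x')) = t - (ip a x - b) := by
    rw [← ht.ip_eq hconv ha hx', sub_sub_sub_comm, sub_sub_cancel]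
    simp only [ip_eq_dotProduct, dotProduct_sub, dotProduct_smul, smul_eq_mul] at hself ⊢
    rw [hself]
    ring
  rw [← hip]
  refine abs_ip_le_norm1_mul fun j ↦ (abs_sub _ _).trans ?_
  linarith [abs_le_of_mem_subdiff_norm1 hlam (sub_mem_subdiff hconv hx) j,
    abs_le_of_mem_subdiff_norm1 hlam (sub_mem_subdiff hconv hx') j]

lemma breg_norm1_le (ht : IsExactStep (addHalfSq (lam • norm1)) u a b t) (hlam : 0 ≤ lam)
    (ha : enorm2 a = 1) (hx : u ∈ subdiff (addHalfSq (lam • norm1)) x)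
    (hx' : u - t • a ∈ subdiff (addHalfSq (lam • norm1)) x') (y : I → ℝ) :
    breg (addHalfSq (lam • norm1)) (u - t • a) x' y ≤
      breg (addHalfSq (lam • norm1)) u x y
        + (1 / 2) * ((b - ip a y) ^ 2 - ip a (x - y) ^ 2)
        + 2 * lam * (norm1 a * |b - ip a y|) := by
  have hbreg := ht.breg_le (convexOn_smul_norm1 hlam) ha hx hx' y
  set c := b - ip a y with hc
  have herr : -((t - (ip a x - b)) * c) ≤ 2 * lam * (norm1 a * |c|) := by
    calc -((t - (ip a x - b)) * c) = -(t - (ip a x - b)) * c := by ring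
      _ ≤ norm1 a * (2 * lam) * |c| :=
          mul_le_mul_abs_of_abs_le ((abs_neg _).trans_le (ht.abs_sub_le hlam ha hx hx')) c
      _ = 2 * lam * (norm1 a * |c|) := by ring
  have hip : ip a (x - y) = (ip a x - b) + c := by
    rw [hc, sub_add_sub_cancel]; exact dotProduct_sub ..
  rw [hip]
  linarith

end IsExactStep

end SparseRegularizer

section Threshold

variable {ι : Type*} {e c : ι → ℝ} {Q ρ : ℝ}

lemma mul_sum_abs_le_sqrt_mul {s : Finset ι} {E : ℝ} (hρ : 0 ≤ ρ)
    (hcard : Q ^ 2 * s.card ≤ ρ * E) (hsum : ∑ i ∈ s, e i ^ 2 ≤ E) :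
    Q * ∑ i ∈ s, |e i| ≤ √ρ * E := by
  have hE : 0 ≤ E := (Finset.sum_nonneg fun i _ ↦ sq_nonneg (e i)).trans hsum
  have hcs : (∑ i ∈ s, |e i|) ^ 2 ≤ s.card * ∑ i ∈ s, e i ^ 2 := by
    simpa only [sq_abs] using sq_sum_le_card_mul_sum_sq (s := s) (f := fun i ↦ |e i|)
  refine le_of_sq_le_sq ?_ (by positivity)
  calc (Q * ∑ i ∈ s, |e i|) ^ 2 = Q ^ 2 * (∑ i ∈ s, |e i|) ^ 2 := mul_pow ..
    _ ≤ Q ^ 2 * (s.card * ∑ i ∈ s, e i ^ 2) := by gcongr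
    _ = Q ^ 2 * s.card * ∑ i ∈ s, e i ^ 2 := by ring
    _ ≤ ρ * E * E := by gcongr
    _ = (√ρ * E) ^ 2 := by rw [mul_pow, Real.sq_sqrt hρ]; ring

lemma sq_sub_sq_le_of_abs_sub_le {e c : ℝ} (h : |e - c| ≤ Q) :
    c ^ 2 - e ^ 2 ≤ Q ^ 2 + 2 * (Q * |e|) := by
  have hc : |c| ≤ |e| + Q := by
    linarith [abs_sub_abs_le_abs_sub c e, abs_sub_comm c e]
  have hsq : c ^ 2 ≤ (|e| + Q) ^ 2 := sq_abs c ▸ pow_le_pow_left₀ (abs_nonneg c) hc 2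
  linarith [sq_abs e]

variable [Fintype ι] [DecidableEq ι] {N K : Finset ι}

lemma sq_mul_card_le_mul_sum_sq (hQ : 0 ≤ Q) (hρ : 0 ≤ ρ) (hK : ∀ i ∉ K, c i = 0)
    (hN : ∀ i ∉ N, Q ≤ |e i - c i|) (hcard : (K.card : ℝ) ≤ ρ * (N ∪ K)ᶜ.card) :
    Q ^ 2 * K.card ≤ ρ * ∑ i, e i ^ 2 := by
  have hlarge : ∀ i ∈ (N ∪ K)ᶜ, Q ^ 2 ≤ e i ^ 2 := by
    intro i hi
    simp only [Finset.mem_compl, Finset.mem_union, not_or] at hi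
    have hi' := hN i hi.1
    rw [hK i hi.2, sub_zero] at hi'
    exact sq_abs (e i) ▸ pow_le_pow_left₀ hQ hi' 2
  calc Q ^ 2 * K.card ≤ Q ^ 2 * (ρ * (N ∪ K)ᶜ.card) := by gcongr
    _ = ρ * ((N ∪ K)ᶜ.card • Q ^ 2) := by rw [nsmul_eq_mul]; ring
    _ ≤ ρ * ∑ i ∈ (N ∪ K)ᶜ, e i ^ 2 := by
        gcongr; exact Finset.card_nsmul_le_sum (N ∪ K)ᶜ (fun i ↦ e i ^ 2) (Q ^ 2) hlarge
    _ ≤ ρ * ∑ i, e i ^ 2 :=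
        mul_le_mul_of_nonneg_left
          (Finset.sum_le_univ_sum_of_nonneg fun i ↦ sq_nonneg (e i)) hρ

lemma sum_sq_sub_sq_le (hQ : 0 ≤ Q) (hρ : 0 ≤ ρ) (hK : ∀ i ∉ K, c i = 0)
    (hle : ∀ i ∈ N, |e i - c i| ≤ Q) (hge : ∀ i ∉ N, Q ≤ |e i - c i|)
    (hcard : (K.card : ℝ) ≤ ρ * (N ∪ K)ᶜ.card) :
    ∑ i ∈ N, (c i ^ 2 - e i ^ 2) ≤
      (2 * √ρ + ρ) * ∑ i, e i ^ 2 - ∑ i ∈ N \ K, e i ^ 2 := by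
  have hQK := sq_mul_card_le_mul_sum_sq hQ hρ hK hge hcard
  have hsubset : ((N ∩ K).card : ℝ) ≤ K.card := by
    exact_mod_cast Finset.card_le_card Finset.inter_subset_right
  have hQNK : Q ^ 2 * (N ∩ K).card ≤ ρ * ∑ i, e i ^ 2 :=
    (mul_le_mul_of_nonneg_left hsubset (sq_nonneg Q)).trans hQK
  have habs : Q * ∑ i ∈ N ∩ K, |e i| ≤ √ρ * ∑ i, e i ^ 2 :=
    mul_sum_abs_le_sqrt_mul hρ hQNK <|
      Finset.sum_le_univ_sum_of_nonneg fun i ↦ sq_nonneg (e i)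
  have hclean : ∑ i ∈ N \ K, (c i ^ 2 - e i ^ 2) = -∑ i ∈ N \ K, e i ^ 2 := by
    rw [← Finset.sum_neg_distrib]
    refine Finset.sum_congr rfl fun i hi ↦ ?_
    rw [hK i (Finset.mem_sdiff.mp hi).2]
    ring
  have hcorrupted : ∑ i ∈ N ∩ K, (c i ^ 2 - e i ^ 2) ≤ (2 * √ρ + ρ) * ∑ i, e i ^ 2 := by
    calc ∑ i ∈ N ∩ K, (c i ^ 2 - e i ^ 2)
        ≤ ∑ i ∈ N ∩ K, (Q ^ 2 + 2 * (Q * |e i|)) := Finset.sum_le_sum fun i hi ↦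
          sq_sub_sq_le_of_abs_sub_le (hle i (Finset.mem_inter.mp hi).1)
      _ = Q ^ 2 * (N ∩ K).card + 2 * (Q * ∑ i ∈ N ∩ K, |e i|) := by
        rw [Finset.sum_add_distrib, Finset.sum_const, nsmul_eq_mul, mul_comm, Finset.mul_sum,
          Finset.mul_sum]
      _ ≤ (2 * √ρ + ρ) * ∑ i, e i ^ 2 := by linarith
  rw [← Finset.sum_inter_add_sum_sdiff N K, hclean]
  linarith

lemma card_le_div_mul_card_compl_union {q β : ℝ} (hβ : 0 ≤ β) (hq : q < 1 - β)
    (hN : (N.card : ℝ) ≤ q * Fintype.card ι) (hK : (K.card : ℝ) ≤ β * Fintype.card ι) :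
    (K.card : ℝ) ≤ β / (1 - q - β) * (N ∪ K)ᶜ.card := by
  have hpos : 0 < 1 - q - β := by linarith
  have hunion : ((N ∪ K).card : ℝ) ≤ N.card + K.card := by
    exact_mod_cast Finset.card_union_le N K
  have htotal : ((N ∪ K).card : ℝ) + (N ∪ K)ᶜ.card = Fintype.card ι := by
    exact_mod_cast Finset.card_add_card_compl (N ∪ K)
  calc (K.card : ℝ) ≤ β * Fintype.card ι := hK
    _ = β / (1 - q - β) * ((1 - q - β) * Fintype.card ι) := by field_simp
    _ ≤ β / (1 - q - β) * (N ∪ K)ᶜ.card := by gcongr; linarith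

lemma le_card_sdiff_of_card {q β : ℝ} {k : ℕ} (hk : (k : ℝ) ≤ (q - β) * Fintype.card ι)
    (hN : q * Fintype.card ι ≤ N.card) (hK : (K.card : ℝ) ≤ β * Fintype.card ι) :
    k ≤ (N \ K).card := by
  have hsdiff : (N.card : ℝ) ≤ (N \ K).card + K.card := by
    exact_mod_cast Finset.card_le_card_sdiff_add_card
  exact_mod_cast (by linarith : (k : ℝ) ≤ (N \ K).card)

end Threshold

section QuantileRaSK

variable {m n k : ℕ} {lam q β Q : ℝ} {A : Matrix (Fin m) (Fin n) ℝ} {b t : Fin m → ℝ}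
  {x xs xhat : Fin n → ℝ} {x' : Fin m → Fin n → ℝ} {N : Finset (Fin m)}

lemma sum_norm1_mul_abs_le (A : Matrix (Fin m) (Fin n) ℝ) (N : Finset (Fin m)) (c : Fin m → ℝ) :
    ∑ i ∈ N, norm1 (A i) * |c i| ≤ enorm2 c * norm12 A :=
  calc ∑ i ∈ N, norm1 (A i) * |c i|
      ≤ ∑ i, norm1 (A i) * |c i| :=
        Finset.sum_le_univ_sum_of_nonneg fun i ↦ mul_nonneg (norm1_nonneg (A i)) (abs_nonneg _)
    _ ≤ √(∑ i, norm1 (A i) ^ 2) * √(∑ i, |c i| ^ 2) := Real.sum_mul_le_sqrt_mul_sqrt ..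
    _ = enorm2 c * norm12 A := by simp only [sq_abs, enorm2, norm12, mul_comm]

lemma sum_breg_exactStep_le_sum_sq (hlam : 0 ≤ lam) (hrows : ∀ i ∈ N, enorm2 (A i) = 1)
    (hxs : xs ∈ subdiff (addHalfSq (lam • norm1)) x)
    (ht : ∀ i ∈ N, IsExactStep (addHalfSq (lam • norm1)) xs (A i) (b i) (t i))
    (hx' : ∀ i ∈ N, xs - t i • A i ∈ subdiff (addHalfSq (lam • norm1)) (x' i))
    (xhat : Fin n → ℝ) :
    ∑ i ∈ N, breg (addHalfSq (lam • norm1)) (xs - t i • A i) (x' i) xhat ≤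
      N.card * breg (addHalfSq (lam • norm1)) xs x xhat
        + (1 / 2) * ∑ i ∈ N, ((b - A.mulVec xhat) i ^ 2 - A.mulVec (x - xhat) i ^ 2)
        + 2 * lam * (enorm2 (b - A.mulVec xhat) * norm12 A) := by
  calc ∑ i ∈ N, breg (addHalfSq (lam • norm1)) (xs - t i • A i) (x' i) xhat
      ≤ ∑ i ∈ N, (breg (addHalfSq (lam • norm1)) xs x xhat
          + (1 / 2) * ((b - A.mulVec xhat) i ^ 2 - A.mulVec (x - xhat) i ^ 2)
          + 2 * lam * (norm1 (A i) * |(b - A.mulVec xhat) i|)) :=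
        Finset.sum_le_sum fun i hi ↦
          (ht i hi).breg_norm1_le hlam (hrows i hi) hxs (hx' i hi) xhat
    _ = N.card * breg (addHalfSq (lam • norm1)) xs x xhat
          + (1 / 2) * ∑ i ∈ N, ((b - A.mulVec xhat) i ^ 2 - A.mulVec (x - xhat) i ^ 2)
          + 2 * lam * ∑ i ∈ N, norm1 (A i) * |(b - A.mulVec xhat) i| := by
        simp only [Finset.sum_add_distrib, Finset.sum_const, nsmul_eq_mul, Finset.mul_sum]
    _ ≤ _ := by gcongr; exact sum_norm1_mul_abs_le A N _

lemma sum_sq_sub_sq_mulVec_le (hQ : 0 ≤ Q) (hβ : 0 ≤ β) (hq : q < 1 - β)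
    (hk : (k : ℝ) ≤ (q - β) * m)
    (hb : ((Finset.univ.filter fun i ↦ b i ≠ A.mulVec xhat i).card : ℝ) ≤ β * m)
    (hN : (N.card : ℝ) = q * m) (hle : ∀ i ∈ N, |ip (A i) x - b i| ≤ Q)
    (hge : ∀ i ∉ N, Q ≤ |ip (A i) x - b i|) :
    ∑ i ∈ N, ((b - A.mulVec xhat) i ^ 2 - A.mulVec (x - xhat) i ^ 2) ≤
      ((2 * √(β / (1 - q - β)) + β / (1 - q - β)) * sigmaMax A ^ 2 - sigmaTildeQBMin A k ^ 2)
        * enorm2 (x - xhat) ^ 2 := by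
  set K := Finset.univ.filter fun i ↦ b i ≠ A.mulVec xhat i
  set ρ := β / (1 - q - β)
  have hρ : 0 ≤ ρ := div_nonneg hβ (by linarith)
  have hcardm : (m : ℝ) = Fintype.card (Fin m) := by rw [Fintype.card_fin]
  have hresidual (i : Fin m) :
      A.mulVec (x - xhat) i - (b - A.mulVec xhat) i = ip (A i) x - b i := by
    rw [Matrix.mulVec_sub, Pi.sub_apply, Pi.sub_apply]
    exact sub_sub_sub_cancel_right ..
  have hK : ∀ i ∉ K, (b - A.mulVec xhat) i = 0 := fun i hi ↦ by
    simpa [K, sub_eq_zero] using hi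
  rw [hcardm] at hk hb hN
  have hsum := sum_sq_sub_sq_le (e := A.mulVec (x - xhat)) hQ hρ hK
    (by simpa only [hresidual]) (by simpa only [hresidual])
    (card_le_div_mul_card_compl_union hβ hq hN.le hb)
  have hmin := sigmaTildeQBMin_sq_mul_le A (le_card_sdiff_of_card hk hN.ge hb) (x - xhat)
  have hmax : ∑ i, A.mulVec (x - xhat) i ^ 2 ≤ sigmaMax A ^ 2 * enorm2 (x - xhat) ^ 2 := by
    rw [← enorm2_sq, ← mul_pow]
    exact pow_le_pow_left₀ (enorm2_nonneg _) (enorm2_mulVec_le_sigmaMax_mul A _) 2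
  linarith [mul_le_mul_of_nonneg_left hmax (by positivity : 0 ≤ 2 * √ρ + ρ)]

lemma sum_breg_exactStep_le (hlam : 0 ≤ lam) (hrows : ∀ i ∈ N, enorm2 (A i) = 1)
    (hQ : 0 ≤ Q) (hβ : 0 ≤ β) (hq : q < 1 - β) (hk : (k : ℝ) ≤ (q - β) * m) (hxhat : xhat ≠ 0)
    (hb : ((Finset.univ.filter fun i ↦ b i ≠ A.mulVec xhat i).card : ℝ) ≤ β * m)
    (hxs : xs ∈ subdiff (addHalfSq (lam • norm1)) x)
    (hN : (N.card : ℝ) = q * m) (hle : ∀ i ∈ N, |ip (A i) x - b i| ≤ Q)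
    (hge : ∀ i ∉ N, Q ≤ |ip (A i) x - b i|)
    (ht : ∀ i ∈ N, IsExactStep (addHalfSq (lam • norm1)) xs (A i) (b i) (t i))
    (hx' : ∀ i ∈ N, xs - t i • A i ∈ subdiff (addHalfSq (lam • norm1)) (x' i)) :
    ∑ i ∈ N, breg (addHalfSq (lam • norm1)) (xs - t i • A i) (x' i) xhat ≤
      (q * m - (1 / 2) * (xminOf xhat / (xminOf xhat + 2 * lam)) * sigmaTildeQBMin A k ^ 2
          + (2 * √(β / (1 - q - β)) + β / (1 - q - β)) * sigmaMax A ^ 2)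
        * breg (addHalfSq (lam • norm1)) xs x xhat
        + 2 * lam * (enorm2 (b - A.mulVec xhat) * norm12 A) := by
  have hsteps := sum_breg_exactStep_le_sum_sq hlam hrows hxs ht hx' xhat
  have hsq := sum_sq_sub_sq_mulVec_le hQ hβ hq hk hb hN hle hge
  have hlower := half_enorm2_sq_le_breg (convexOn_smul_norm1 hlam) hxs xhat
  have hupper := div_mul_breg_le_enorm2_sq hlam hxs hxhat
  rw [hN] at hsteps
  rw [enorm2_sub_comm] at hlower
  set ρ := β / (1 - q - β)
  have hρ : 0 ≤ ρ := div_nonneg hβ (by linarith)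
  have hdescent := mul_le_mul_of_nonneg_left hupper (sq_nonneg (sigmaTildeQBMin A k))
  have hcorruption := mul_le_mul_of_nonneg_left hlower
    (by positivity : 0 ≤ (2 * √ρ + ρ) * sigmaMax A ^ 2)
  linarith

theorem stmt13_general (hm : 0 < m) (hlam : 0 ≤ lam)
    {f : (Fin n → ℝ) → ℝ} (hf : f = fun x ↦ lam * norm1 x + (1 / 2) * enorm2 x ^ 2)
    (hrows : ∀ i ∈ N, enorm2 (A i) = 1)
    (hβq : β < q) (hq : q < 1 - β) (hk : (k : ℝ) ≤ (q - β) * m) (hxhat : xhat ≠ 0)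
    (hb : ((Finset.univ.filter fun i ↦ b i ≠ A.mulVec xhat i).card : ℝ) ≤ β * m)
    (hxs : xs ∈ subdiff f x)
    (hN : (N.card : ℝ) = q * m) (hle : ∀ i ∈ N, |ip (A i) x - b i| ≤ Q)
    (hge : ∀ i ∉ N, Q ≤ |ip (A i) x - b i|)
    (ht : ∀ i ∈ N, IsExactStep f xs (A i) (b i) (t i))
    {xs' : Fin m → Fin n → ℝ} (hxs' : ∀ i ∈ N, xs' i = xs - t i • A i)
    (hx' : ∀ i ∈ N, xs' i ∈ subdiff f (x' i))
    {C : ℝ} (hC : C = ((q - β) / (2 * q ^ 2 * m)) *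
          (xminOf xhat / (xminOf xhat + 2 * lam)) * sigmaTildeQBMin A k ^ 2 -
        (1 / (q * m)) *
          (2 * Real.sqrt β / Real.sqrt (1 - q - β) + β / (1 - q - β)) * sigmaMax A ^ 2) :
    (1 / (q * m)) * ∑ i ∈ N, breg f (xs' i) (x' i) xhat ≤
      (1 - C) * breg f xs x xhat +
        (2 * lam / (q * m)) * enorm2 (b - A.mulVec xhat) * norm12 A := by
  have hm' : (0 : ℝ) < m := Nat.cast_pos.mpr hm
  have hβ : 0 ≤ β := nonneg_of_mul_nonneg_left ((Nat.cast_nonneg _).trans hb) hm'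
  have hq0 : 0 < q := hβ.trans_lt hβq
  obtain ⟨i₀, hi₀⟩ : N.Nonempty := by
    rw [← Finset.card_pos, ← Nat.cast_pos (α := ℝ), hN]
    positivity
  have hQ : 0 ≤ Q := (abs_nonneg _).trans (hle i₀ hi₀)
  replace hx' : ∀ i ∈ N, xs - t i • A i ∈ subdiff f (x' i) := fun i hi ↦ hxs' i hi ▸ hx' i hi
  have hsteps : ∑ i ∈ N, breg f (xs' i) (x' i) xhat =
      ∑ i ∈ N, breg f (xs - t i • A i) (x' i) xhat :=
    Finset.sum_congr rfl fun i hi ↦ by rw [hxs' i hi]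
  replace hf : f = addHalfSq (lam • norm1) := hf
  subst hf
  have hsum := sum_breg_exactStep_le hlam hrows hQ hβ hq hk hxhat hb hxs hN hle hge ht hx'
  rw [← hsteps, Real.sqrt_div hβ] at hsum
  set D := breg (addHalfSq (lam • norm1)) xs x xhat
  set X := xminOf xhat / (xminOf xhat + 2 * lam)
  set R := 2 * √β / √(1 - q - β) + β / (1 - q - β) with hR
  -- The factor `(q - β) / q ≤ 1` in `C` only weakens the estimate `hsum`.
  have hdescent : (q - β) / q * (X * sigmaTildeQBMin A k ^ 2 * D) ≤
      X * sigmaTildeQBMin A k ^ 2 * D := by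
    have hxmin := xminOf_pos hxhat
    have hD : 0 ≤ D := breg_nonneg hxs xhat
    exact mul_le_of_le_one_left (by positivity) ((div_le_one hq0).mpr (by linarith))
  calc (1 / (q * m)) * ∑ i ∈ N, breg (addHalfSq (lam • norm1)) (xs' i) (x' i) xhat
      ≤ (1 / (q * m)) * (q * m * D - (1 / 2) * ((q - β) / q * (X * sigmaTildeQBMin A k ^ 2 * D))
          + R * sigmaMax A ^ 2 * D + 2 * lam * (enorm2 (b - A.mulVec xhat) * norm12 A)) := by
        gcongr
        rw [hR, mul_div_assoc]
        linarith
    _ = _ := by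
        rw [hC]
        field_simp
        ring

end QuantileRaSK

/-- one-step expectation bound for Quantile-RaSK with exact step in the
corrupted noiseless case, Theorem 3.3(b). -/
theorem stmt13 {m n : ℕ} (lam : ℝ) (hlam : 0 < lam)
    (f : (Fin n → ℝ) → ℝ)
    (hf : f = fun x => lam * norm1 x + (1 / 2) * enorm2 x ^ 2)
    (A : Matrix (Fin m) (Fin n) ℝ)
    (hrank : A.rank = min m n) (hrows : ∀ i, enorm2 (A i) = 1)
    (q β : ℝ) (hβq : β < q) (hq : q < 1 - β)
    (kq kb kqb : ℕ)
    (hkq : (kq : ℝ) = q * m) (hkb : (kb : ℝ) = β * m) (hkqb : (kqb : ℝ) = (q - β) * m)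
    (xhat : Fin n → ℝ) (hAx : A.mulVec xhat ≠ 0)
    (hmin : ∀ z, A.mulVec z = A.mulVec xhat → z ≠ xhat → f xhat < f z)
    (bc : Fin m → ℝ)
    (hbc : (Finset.univ.filter (fun i => bc i ≠ 0)).card = kb)
    (b : Fin m → ℝ) (hb : b = A.mulVec xhat + bc)
    -- condition (3.12)
    (hcond :
      (2 * q / (q - β)) *
          (2 * Real.sqrt β / Real.sqrt (1 - q - β) + β / (1 - q - β)) *
          ((xminOf xhat + 2 * lam) / xminOf xhat) <
        (sigmaTildeQBMin A kqb) ^ 2 / (sigmaMax A) ^ 2)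
    (x xs : Fin n → ℝ) (hxs : xs ∈ subdiff f x)
    (hrange : ∃ u : Fin m → ℝ, xs = A.transpose.mulVec u)
    (Q : ℝ) (hQ : Q = quantileAt kq (fun i => |ip (A i) x - b i|))
    (N2 : Finset (Fin m)) (hN2 : N2 = Finset.univ.filter (fun i => |ip (A i) x - b i| ≤ Q))
    (hN2card : N2.card = kq)
    -- exact-step update
    (t : Fin m → ℝ)
    (ht : ∀ i ∈ N2, ∀ s : ℝ,
      fconj f (xs - t i • A i) + t i * b i ≤ fconj f (xs - s • A i) + s * b i)
    (xs' x' : Fin m → (Fin n → ℝ))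
    (hxs' : ∀ i ∈ N2, xs' i = xs - t i • A i)
    (hx' : ∀ i ∈ N2, xs' i ∈ subdiff f (x' i))
    (C : ℝ)
    (hC : C = ((q - β) / (2 * q ^ 2 * m)) *
          (xminOf xhat / (xminOf xhat + 2 * lam)) * (sigmaTildeQBMin A kqb) ^ 2 -
        (1 / (q * m)) *
          (2 * Real.sqrt β / Real.sqrt (1 - q - β) + β / (1 - q - β)) *
          (sigmaMax A) ^ 2) :
    (1 / (q * m)) * ∑ i ∈ N2, breg f (xs' i) (x' i) xhat ≤
      (1 - C) * breg f xs x xhat +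
        (2 * lam / (q * m)) * enorm2 (b - A.mulVec xhat) * norm12 A := by
  subst hN2
  have hm : m ≠ 0 := by rintro rfl; exact hAx (Subsingleton.elim _ _)
  have hxhat : xhat ≠ 0 := by rintro rfl; exact hAx A.mulVec_zero
  exact stmt13_general (Q := Q) (Nat.pos_of_ne_zero hm) hlam.le hf (fun i _ ↦ hrows i) hβq hq
    hkqb.le hxhat (by simp [hb, hbc, hkb]) hxs (by rw [hN2card, hkq]) (by simp)
    (by simpa using fun i ↦ le_of_lt) ht hxs' hx' hC
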